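/- Let θ ∈ (0,π), let d₁ > d₂ > ⋯ > d_s > 0 and t₁, …, t_s ≥ 1 be integers with Σ_{ℓ=1}^{s} t_ℓ·d_ℓ = n, and let A ∈ SL(n,ℍ) be conjugate in GL(n,ℍ) to the direct sum, over ℓ = 1,…,s, of t_ℓ copies of the Jordan block J(e^{iθ}, d_ℓ). Then A is strongly reversible in SL(n,ℍ) if and only if t_ℓ is even for all 1 ≤ ℓ ≤ s. -/

import Mathlib

set_option maxHeartbeats 1000000

noncomputable section

open Matrix

/-- The embedding of `ℂ` into the real quaternions, onto the subalgebra spanned by `1` and `i`. -/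
def C2H (z : ℂ) : Quaternion ℝ := ⟨z.re, z.im, 0, 0⟩

/-- For a quaternion `q = a + b i + c j + d k`, its first complex coordinate `a + b i`. -/
def qc1 (q : Quaternion ℝ) : ℂ := ⟨q.re, q.imI⟩

/-- For a quaternion `q = a + b i + c j + d k`, its second complex coordinate `c + d i`,
so that `q = qc1 q + (qc2 q) * j`. -/
def qc2 (q : Quaternion ℝ) : ℂ := ⟨q.imJ, q.imK⟩

/-- The embedding `Φ` of quaternionic square matrices into complex matrices of doubled size:
writing `A = A₁ + A₂ · j`, `Φ A` is the block matrix `[[A₁, A₂], [-conj A₂, conj A₁]]`. -/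
def Phi {m : Type*} (A : Matrix m m (Quaternion ℝ)) : Matrix (m ⊕ m) (m ⊕ m) ℂ :=
  Matrix.fromBlocks (A.map qc1) (A.map qc2)
    (-(A.map fun q => (starRingEnd ℂ) (qc2 q))) (A.map fun q => (starRingEnd ℂ) (qc1 q))

/-- The determinant of a quaternionic matrix `A`: the determinant of `Φ A`.
`A ∈ GL(n, ℍ)` means `qdet A ≠ 0`, and `A ∈ SL(n, ℍ)` means `qdet A = 1`. -/
def qdet {m : Type*} [Fintype m] [DecidableEq m] (A : Matrix m m (Quaternion ℝ)) : ℂ :=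
  (Phi A).det

/-- The `m × m` Jordan block `J(λ, m)` over `ℂ`: `λ` on the diagonal, `1` on the
superdiagonal, `0` elsewhere. -/
def jordanC (lam : ℂ) (m : ℕ) : Matrix (Fin m) (Fin m) ℂ :=
  Matrix.of fun i j => if (j : ℕ) = (i : ℕ) then lam else if (j : ℕ) = (i : ℕ) + 1 then 1 else 0

/-- The `m × m` Jordan block `J(λ, m)`, `λ ∈ ℂ`, viewed as a quaternionic matrix. -/
def jordanH (lam : ℂ) (m : ℕ) : Matrix (Fin m) (Fin m) (Quaternion ℝ) :=
  (jordanC lam m).map C2H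

/-!
Write an involution `H` that reverses the Jordan form `J` as `H = X + Y j` with `X` and `Y` complex.
The relation `J H J = H` splits into `J X J = X` and `J Y J̄ = Y`. The first forces `X = 0`, since
the eigenvalue satisfies `λ² ≠ 1`, and then `H² = 1` says `Y Ȳ = -1`: the antilinear map `v ↦ Y v̄`
is a quaternionic structure. Since `|λ| = 1`, the second relation makes `Y` block triangular for the
filtration by height inside the Jordan blocks, so each layer inherits a quaternionic structure. The
layer at height `k` has one basis vector for each block of size greater than `k`, hence the number
of such blocks is even. Conversely, a Möbius substitution carries `J(λ̄, d)` to `J(λ, d)⁻¹`, and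
pairing blocks of equal size by a symplectic matrix turns it into such a `Y`; then `H = Y j` has
determinant `det Y · det Ȳ = 1`.
-/

section Algebra

variable {K R : Type*} [CommRing K] [Ring R] [Algebra K R]

theorem one_sub_smul_pow_mul {a b x : R} (hx : a * x * b = x) (c : K) (k : ℕ) :
    (1 - c • a) ^ k * x = a ^ k * x * (b - algebraMap K R c) ^ k := by
  have hstep : (1 - c • a) * x = a * x * (b - algebraMap K R c) := by
    rw [mul_sub, hx, sub_mul, one_mul, smul_mul_assoc, ← Algebra.commutes, ← Algebra.smul_def]
  induction k with
  | zero => simp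
  | succ k ih =>
    have hcomm : Commute (1 - c • a) (a ^ k) :=
      ((Commute.one_left a).sub_left ((Commute.refl a).smul_left c)).pow_right k
    calc (1 - c • a) ^ (k + 1) * x
        = (1 - c • a) * a ^ k * x * (b - algebraMap K R c) ^ k := by
          rw [pow_succ', mul_assoc, ih]; simp only [mul_assoc]
      _ = a ^ k * ((1 - c • a) * x) * (b - algebraMap K R c) ^ k := by
          rw [hcomm.eq]; simp only [mul_assoc]
      _ = a ^ (k + 1) * x * (b - algebraMap K R c) ^ (k + 1) := by
          rw [hstep, pow_succ a, pow_succ' (b - _)]; simp only [mul_assoc]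

theorem eq_zero_of_mul_mul_eq_self {a x : R} {c : K} (hc : IsUnit (1 - c * c))
    (ha : IsNilpotent (a - algebraMap K R c)) (hx : a * x * a = x) : x = 0 := by
  have hunit : IsUnit (1 - c • a) := by
    have hdecomp : 1 - c • a = algebraMap K R (1 - c * c) - c • (a - algebraMap K R c) := by
      simp only [Algebra.smul_def, map_sub, map_one, map_mul, mul_sub]
      abel
    rw [hdecomp, sub_eq_add_neg]
    exact (ha.smul c).neg.isUnit_add_left_of_commute (hc.map _) (Algebra.commutes _ _).symm
  obtain ⟨k, hk⟩ := ha
  have hpow := one_sub_smul_pow_mul hx c k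
  rwa [hk, mul_zero, (hunit.pow k).mul_right_eq_zero] at hpow

end Algebra

section BlockTriangular

variable {m α R : Type*} [Fintype m] [LinearOrder α] [CommRing R]

theorem toSquareBlock_mul_of_blockTriangular {M N : Matrix m m R} {b : m → α}
    (hM : M.BlockTriangular b) (hN : N.BlockTriangular b) (k : α) :
    (M * N).toSquareBlock b k = M.toSquareBlock b k * N.toSquareBlock b k := by
  have hoff : (M.toBlock (b · = k) (¬ b · = k)) * N.toBlock (¬ b · = k) (b · = k) = 0 := by
    ext x y
    refine Finset.sum_eq_zero fun z _ => ?_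
    rcases lt_or_gt_of_ne z.2 with hz | hz
    · exact mul_eq_zero_of_left (hM (hz.trans_eq x.2.symm)) _
    · exact mul_eq_zero_of_right _ (hN (y.2.trans_lt hz))
  exact (toBlock_mul_eq_add (b · = k) (b · = k) (b · = k) M N).trans (by rw [hoff, add_zero]; rfl)

end BlockTriangular

section ReversingStructure

variable {m m' : Type*} [Fintype m] [DecidableEq m] [Fintype m'] [DecidableEq m']

/-- The antilinear map `v ↦ Y v̄` is a quaternionic structure (it squares to `-1`) that conjugates
`J` to its inverse. In the paper's notation, `Y · j` is then a reversing involution of `J` in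
`GL(n, ℍ)`. -/
structure IsReversingStructure (J Y : Matrix m m ℂ) : Prop where
  mul_mul_conj : J * Y * (starRingEnd ℂ).mapMatrix J = Y
  mul_conj : Y * (starRingEnd ℂ).mapMatrix Y = -1

theorem isReversingStructure_reindex_iff (e : m ≃ m') {J Y : Matrix m m ℂ} :
    IsReversingStructure (reindex e e J) (reindex e e Y) ↔ IsReversingStructure J Y := by
  let φ := reindexAlgEquiv ℂ ℂ e
  have hconj (M : Matrix m m ℂ) :
      (starRingEnd ℂ).mapMatrix (φ M) = φ ((starRingEnd ℂ).mapMatrix M) := rfl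
  change IsReversingStructure (φ J) (φ Y) ↔ _
  constructor
  · rintro ⟨h₁, h₂⟩
    rw [hconj, ← map_mul, ← map_mul] at h₁
    rw [hconj, ← map_mul, ← map_one φ, ← map_neg] at h₂
    exact ⟨φ.injective h₁, φ.injective h₂⟩
  · rintro ⟨h₁, h₂⟩
    exact ⟨by rw [hconj, ← map_mul, ← map_mul, h₁],
      by rw [hconj, ← map_mul, h₂, map_neg, map_one]⟩

theorem exists_isReversingStructure_reindex_iff (e : m ≃ m') {J : Matrix m m ℂ} :
    (∃ Y, IsReversingStructure (reindex e e J) Y) ↔ ∃ Y, IsReversingStructure J Y :=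
  (reindex e e).surjective.exists.trans
    (exists_congr fun _ => isReversingStructure_reindex_iff e)

theorem even_card_of_mul_conj_eq_neg_one {Y : Matrix m m ℂ}
    (hY : Y * (starRingEnd ℂ).mapMatrix Y = -1) : Even (Fintype.card m) := by
  have hdet : ((Complex.normSq Y.det : ℝ) : ℂ) = ((-1) ^ Fintype.card m : ℝ) := by
    rw [← Complex.mul_conj, RingHom.map_det, ← det_mul, hY, det_neg, det_one, mul_one]
    push_cast
    rfl
  by_contra hodd
  rw [(Nat.not_even_iff_odd.mp hodd).neg_one_pow, Complex.ofReal_inj] at hdet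
  linarith [Complex.normSq_nonneg Y.det]

end ReversingStructure

section JordanSum

variable {P : Type*} [DecidableEq P] (lam : ℂ) (D : P → ℕ)

/-- The direct sum of the Jordan blocks `J(lam, D p)` over `p : P`. -/
def jordanSum : Matrix ((p : P) × Fin (D p)) ((p : P) × Fin (D p)) ℂ :=
  blockDiagonal' fun p => jordanC lam (D p)

/-- The direct sum over `p : P` of the matrices of size `D p` with `1` on the `k`-th superdiagonal
and `0` elsewhere; it is the `k`-th power of the nilpotent part of `jordanSum lam D`. -/
def blockShift (k : ℕ) : Matrix ((p : P) × Fin (D p)) ((p : P) × Fin (D p)) ℂ :=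
  of fun x y => if x.1 = y.1 ∧ y.2.val = x.2.val + k then 1 else 0

variable {D} [Fintype P]

theorem blockShift_mul_apply (k : ℕ) (M : Matrix ((p : P) × Fin (D p)) ((p : P) × Fin (D p)) ℂ)
    (p : P) (i : Fin (D p)) (y : (p : P) × Fin (D p)) :
    (blockShift D k * M) ⟨p, i⟩ y = if h : i.val + k < D p then M ⟨p, ⟨i + k, h⟩⟩ y else 0 := by
  rw [mul_apply]
  split_ifs with h
  · rw [Fintype.sum_eq_single ⟨p, ⟨i + k, h⟩⟩]
    · simp [blockShift]
    · rintro ⟨q, j⟩ hne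
      refine mul_eq_zero_of_left (if_neg ?_) _
      rintro ⟨rfl, hj⟩
      exact hne (congrArg (Sigma.mk p) (Fin.ext hj))
  · refine Finset.sum_eq_zero fun z _ => mul_eq_zero_of_left (if_neg ?_) _
    rintro ⟨rfl, hj⟩
    exact h (hj ▸ z.2.isLt)

theorem mul_blockShift_apply (k : ℕ) (M : Matrix ((p : P) × Fin (D p)) ((p : P) × Fin (D p)) ℂ)
    (x : (p : P) × Fin (D p)) (q : P) (j : Fin (D q)) :
    (M * blockShift D k) x ⟨q, j⟩ =
      if k ≤ j.val then M x ⟨q, ⟨j - k, (Nat.sub_le _ _).trans_lt j.isLt⟩⟩ else 0 := by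
  rw [mul_apply]
  split_ifs with h
  · rw [Fintype.sum_eq_single ⟨q, ⟨j - k, (Nat.sub_le _ _).trans_lt j.isLt⟩⟩]
    · simp [blockShift, h]
    · rintro ⟨p, i⟩ hne
      refine mul_eq_zero_of_right _ (if_neg ?_)
      rintro ⟨rfl, hi⟩
      exact hne (congrArg (Sigma.mk p) (Fin.ext (Nat.eq_sub_of_add_eq hi.symm)))
  · refine Finset.sum_eq_zero fun z _ => mul_eq_zero_of_right _ (if_neg ?_)
    rintro ⟨-, hj⟩
    exact h (hj ▸ Nat.le_add_left k _)

theorem blockShift_one_pow (k : ℕ) : blockShift D 1 ^ k = blockShift D k := by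
  induction k with
  | zero =>
    ext ⟨p, i⟩ ⟨q, j⟩
    rw [← mul_one (blockShift D 0), blockShift_mul_apply, pow_zero,
      dif_pos (c := i.val + 0 < D p) i.isLt]
    rfl
  | succ k ih =>
    ext ⟨p, i⟩ ⟨q, j⟩
    rw [pow_succ', ih, blockShift_mul_apply]
    have hj := j.isLt
    split_ifs with h
    · simp only [blockShift, of_apply, add_right_comm, add_assoc]
    · simp only [blockShift, of_apply]
      rw [if_neg]
      rintro ⟨rfl, hj'⟩
      omega

theorem isNilpotent_blockShift_one : IsNilpotent (blockShift D 1) := by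
  refine ⟨∑ p, D p, ?_⟩
  ext ⟨p, i⟩ y
  have hle : D p ≤ ∑ p, D p := Finset.single_le_sum (fun _ _ => Nat.zero_le _) (Finset.mem_univ p)
  rw [blockShift_one_pow, ← mul_one (blockShift D _), blockShift_mul_apply, dif_neg (by omega),
    Matrix.zero_apply]

variable (D)

theorem jordanSum_eq : jordanSum lam D = algebraMap ℂ _ lam + blockShift D 1 := by
  ext ⟨p, i⟩ ⟨q, j⟩
  rw [jordanSum, Matrix.add_apply, algebraMap_matrix_apply]
  by_cases hpq : p = q
  · subst hpq
    simp only [blockDiagonal'_apply_eq, jordanC, blockShift, of_apply, true_and, Sigma.mk.injEq,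
      heq_eq_eq, Fin.ext_iff, eq_comm (a := j.val)]
    split_ifs <;> first | omega | simp
  · simp [blockDiagonal'_apply_ne _ _ _ hpq, blockShift, hpq]

theorem conj_jordanSum :
    (starRingEnd ℂ).mapMatrix (jordanSum lam D) = jordanSum (starRingEnd ℂ lam) D := by
  have hblock (k : ℕ) :
      (jordanC lam k).map (starRingEnd ℂ) = jordanC (starRingEnd ℂ lam) k := by
    ext i j
    simp only [jordanC, map_apply, of_apply]
    split_ifs <;> simp
  rw [RingHom.mapMatrix_apply, jordanSum, blockDiagonal'_map _ _ (map_zero _)]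
  simp only [hblock, jordanSum]

variable {lam} in
theorem jordanSum_mul_mul_conj (hlam : lam * starRingEnd ℂ lam = 1)
    (Y : Matrix ((p : P) × Fin (D p)) ((p : P) × Fin (D p)) ℂ) :
    jordanSum lam D * Y * (starRingEnd ℂ).mapMatrix (jordanSum lam D) =
      Y + (lam • (Y * blockShift D 1) + starRingEnd ℂ lam • (blockShift D 1 * Y) +
        blockShift D 1 * Y * blockShift D 1) := by
  rw [conj_jordanSum, jordanSum_eq, jordanSum_eq]
  simp only [add_mul, mul_add, Algebra.algebraMap_eq_smul_one, smul_mul_assoc, one_mul,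
    mul_smul_comm, mul_one, smul_add, smul_smul, mul_comm (starRingEnd ℂ lam) lam, hlam, one_smul]
  abel

theorem isNilpotent_jordanSum_sub : IsNilpotent (jordanSum lam D - algebraMap ℂ _ lam) := by
  rw [jordanSum_eq, add_sub_cancel_left]
  exact isNilpotent_blockShift_one

end JordanSum

section Parity

variable {P : Type*} [Fintype P] [DecidableEq P] {lam : ℂ} {D : P → ℕ}
  {Y : Matrix ((p : P) × Fin (D p)) ((p : P) × Fin (D p)) ℂ}

theorem IsReversingStructure.blockTriangular (hlam : lam * starRingEnd ℂ lam = 1)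
    (hY : IsReversingStructure (jordanSum lam D) Y) : Y.BlockTriangular fun x => x.2.val := by
  rintro ⟨p, i⟩ ⟨q, j⟩ hji
  have hlam0 : starRingEnd ℂ lam ≠ 0 := right_ne_zero_of_mul_eq_one hlam
  have hJ : 1 - starRingEnd ℂ lam • jordanSum lam D = -starRingEnd ℂ lam • blockShift D 1 := by
    rw [jordanSum_eq, smul_add, Algebra.smul_def, ← map_mul, mul_comm, hlam, map_one, neg_smul]
    abel
  have hpow := one_sub_smul_pow_mul hY.mul_mul_conj (starRingEnd ℂ lam) (j + 1)
  rw [hJ, conj_jordanSum, jordanSum_eq (starRingEnd ℂ lam), add_sub_cancel_left, smul_pow,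
    blockShift_one_pow, smul_mul_assoc] at hpow
  have hentry := congrFun (congrFun hpow ⟨p, ⟨i - (j + 1), by omega⟩⟩) ⟨q, j⟩
  rw [mul_blockShift_apply, if_neg (by omega), Matrix.smul_apply, blockShift_mul_apply,
    dif_pos (by dsimp only at hji ⊢; omega)] at hentry
  simpa [hlam0, Nat.sub_add_cancel hji] using hentry

theorem IsReversingStructure.even_card_lt (hlam : lam * starRingEnd ℂ lam = 1)
    (hY : IsReversingStructure (jordanSum lam D) Y) (k : ℕ) :
    Even (Fintype.card {p // k < D p}) := by
  have htri := hY.blockTriangular hlam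
  have hblock : Y.toSquareBlock (fun x => x.2.val) k *
      (starRingEnd ℂ).mapMatrix (Y.toSquareBlock (fun x => x.2.val) k) = -1 := by
    have hmul := toSquareBlock_mul_of_blockTriangular htri (htri.map (starRingEnd ℂ)) k
    rw [← RingHom.mapMatrix_apply, hY.mul_conj] at hmul
    refine hmul.symm.trans ?_
    ext x y
    simp [toSquareBlock_def, one_apply, Subtype.ext_iff]
  let layer : {x : (p : P) × Fin (D p) // x.2.val = k} ≃ {p // k < D p} :=
    { toFun := fun x => ⟨x.1.1, x.2.symm.trans_lt x.1.2.isLt⟩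
      invFun := fun p => ⟨⟨p.1, ⟨k, p.2⟩⟩, rfl⟩
      left_inv := by rintro ⟨⟨p, i⟩, rfl⟩; rfl
      right_inv := fun _ => rfl }
  rw [← Fintype.card_congr layer]
  exact even_card_of_mul_conj_eq_neg_one hblock

end Parity

section Counting

theorem even_card_eq_of_even_card_lt {P : Type*} [Fintype P] {D : P → ℕ}
    (hD : ∀ p, 0 < D p) (h : ∀ k, Even (Fintype.card {p // k < D p})) (k : ℕ) :
    Even (Fintype.card {p // D p = k}) := by
  cases k with
  | zero =>
    have : IsEmpty {p // D p = 0} := ⟨fun p => (hD p).ne' p.2⟩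
    simp
  | succ k =>
    have hsplit : Fintype.card {p // k < D p} =
        Fintype.card {p // D p = k + 1} + Fintype.card {p // k + 1 < D p} := by
      rw [← Fintype.card_subtype_or_disjoint _ _ (Pi.disjoint_iff.mpr fun p => by
        simpa using fun h => h.le)]
      exact Fintype.card_congr (Equiv.subtypeEquivRight fun p => by omega)
    exact (Nat.even_add.mp (hsplit ▸ h k)).mpr (h (k + 1))

theorem card_sigma_fin_fiber {ι κ : Type*} [Fintype ι] [DecidableEq κ] (d : ι → κ) (t : ι → ℕ)
    (k : κ) :
    Fintype.card {p : (l : ι) × Fin (t l) // d p.1 = k} = ∑ l, if d l = k then t l else 0 := by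
  rw [Fintype.card_subtype, Finset.card_filter, Fintype.sum_sigma]
  refine Finset.sum_congr rfl fun l _ => ?_
  split_ifs <;> simp

theorem forall_even_card_sigma_fin_fiber_iff {ι κ : Type*} [Fintype ι] [DecidableEq κ] {d : ι → κ}
    (hd : Function.Injective d) (t : ι → ℕ) :
    (∀ k, Even (Fintype.card {p : (l : ι) × Fin (t l) // d p.1 = k})) ↔ ∀ l, Even (t l) := by
  simp only [card_sigma_fin_fiber]
  constructor
  · intro h l
    have hl := h (d l)
    rwa [Fintype.sum_eq_single l fun l' hne => if_neg (hd.ne hne), if_pos rfl] at hl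
  · intro h k
    refine Finset.even_sum _ fun l _ => ?_
    split_ifs
    exacts [h l, Even.zero]

theorem exists_equiv_sum_of_even_card_fiber.{u, v} {P : Type u} {κ : Type v} [Fintype P]
    [DecidableEq κ] (f : P → κ)
    (hf : ∀ k, Even (Fintype.card {p // f p = k})) :
    ∃ (Q : Type v) (e : P ≃ Q ⊕ Q) (g : Q → κ), ∀ p, f p = Sum.elim g g (e p) := by
  choose r hr using hf
  have fiberEquiv (k : κ) : {p // f p = k} ≃ Fin (r k) ⊕ Fin (r k) :=
    (Fintype.equivFinOfCardEq (hr k)).trans finSumFinEquiv.symm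
  let e : P ≃ ((k : κ) × Fin (r k)) ⊕ ((k : κ) × Fin (r k)) :=
    (Equiv.sigmaFiberEquiv f).symm.trans
      ((Equiv.sigmaCongrRight fiberEquiv).trans (Equiv.sigmaSumDistrib _ _))
  refine ⟨_, e, Sigma.fst, fun p => ?_⟩
  have hp : e p = Equiv.sigmaSumDistrib _ _ ⟨f p, fiberEquiv (f p) ⟨p, rfl⟩⟩ := rfl
  rw [hp]
  rcases fiberEquiv (f p) ⟨p, rfl⟩ with _ | _ <;> rfl

theorem exists_mul_self_eq_neg_one_of_even_card_fiber {P κ : Type*} [Fintype P] [DecidableEq P]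
    [DecidableEq κ] (f : P → κ) (hf : ∀ k, Even (Fintype.card {p // f p = k})) :
    ∃ E : Matrix P P ℤ, E * E = -1 ∧ ∀ p q, E p q ≠ 0 → f p = f q := by
  classical
  obtain ⟨Q, e, g, hfe⟩ := exists_equiv_sum_of_even_card_fiber f hf
  have : Fintype Q := Fintype.ofInjective _ (e.symm.injective.comp Sum.inl_injective)
  refine ⟨(Matrix.J Q ℤ).submatrix e e, ?_, fun p q hpq => ?_⟩
  · rw [submatrix_mul_equiv, J_squared]
    exact congrArg Neg.neg (submatrix_one_equiv e)
  · rw [hfe p, hfe q]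
    rw [submatrix_apply] at hpq
    rcases hp : e p with a | a <;> rcases hq : e q with b | b <;>
      simp [Matrix.J, one_apply, hp, hq] at hpq <;> simp [hpq]

end Counting

section Pascal

theorem sum_neg_one_pow_mul_choose_mul_choose {i j m : ℕ} (hj : j < m) :
    ∑ k ∈ Finset.range m, (-1 : ℤ) ^ k * (k.choose i * j.choose k) =
      if i = j then (-1) ^ j else 0 := by
  rw [Finset.eventually_constant_sum (N := j + 1)
    (fun k hk => by simp [Nat.choose_eq_zero_of_lt hk]) hj]
  rcases lt_or_ge j i with hji | hij
  · rw [if_neg hji.ne']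
    refine Finset.sum_eq_zero fun k hk => ?_
    simp [Nat.choose_eq_zero_of_lt ((Finset.mem_range_succ_iff.mp hk).trans_lt hji)]
  obtain ⟨n, rfl⟩ := Nat.exists_eq_add_of_le hij
  have hlow : ∑ k ∈ Finset.range i, (-1 : ℤ) ^ k * (k.choose i * (i + n).choose k) = 0 :=
    Finset.sum_eq_zero fun k hk => by simp [Nat.choose_eq_zero_of_lt (Finset.mem_range.mp hk)]
  have hterm (l : ℕ) : (-1 : ℤ) ^ (i + l) * ((i + l).choose i * (i + n).choose (i + l)) =
      (-1) ^ i * (i + n).choose i * ((-1) ^ l * n.choose l) := by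
    have h := Nat.choose_mul (n := i + n) (Nat.le_add_right i l)
    rw [Nat.add_sub_cancel_left, Nat.add_sub_cancel_left] at h
    zify at h
    linear_combination (-1 : ℤ) ^ (i + l) * h
  rw [add_assoc, Finset.sum_range_add, hlow, zero_add, Finset.sum_congr rfl fun l _ => hterm l,
    ← Finset.mul_sum, Int.alternating_sum_range_choose]
  rcases n with _ | n <;> simp

/-- The entries of a triangular matrix that intertwines `J(lam, d)⁻¹` and `J(conj lam, d)` when
`lam` has modulus one. Row `i` lists the coefficients of `(1 + lam u)⁻¹ (-lam² u / (1 + lam u))ⁱ`,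
so the matrix is a weighted Möbius substitution; it takes `(lam + u)⁻¹` to `conj lam + u`. -/
def twistedPascal (lam : ℂ) (i j : ℕ) : ℂ := (-1) ^ j * j.choose i * lam ^ (i + j)

theorem twistedPascal_eq_zero_of_lt (lam : ℂ) {i j : ℕ} (h : j < i) :
    twistedPascal lam i j = 0 := by
  simp [twistedPascal, Nat.choose_eq_zero_of_lt h]

variable {lam : ℂ}

theorem twistedPascal_pascal_rule (hlam : lam * starRingEnd ℂ lam = 1) (i j : ℕ) :
    lam * twistedPascal lam i j + starRingEnd ℂ lam * twistedPascal lam (i + 1) (j + 1) +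
      twistedPascal lam (i + 1) j = 0 := by
  simp only [twistedPascal, Nat.choose_succ_succ, Nat.cast_add]
  linear_combination
    -((-1) ^ j * (j.choose i + j.choose (i + 1) : ℂ) * lam ^ (i + j + 1)) * hlam

theorem sum_twistedPascal_mul_conj (hlam : lam * starRingEnd ℂ lam = 1) {i j m : ℕ} (hj : j < m) :
    ∑ k ∈ Finset.range m, twistedPascal lam i k * starRingEnd ℂ (twistedPascal lam k j) =
      if i = j then 1 else 0 := by
  have hterm (k : ℕ) : twistedPascal lam i k * starRingEnd ℂ (twistedPascal lam k j) =
      (-1) ^ j * lam ^ i * starRingEnd ℂ lam ^ j *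
        ((-1 : ℤ) ^ k * (k.choose i * j.choose k) : ℤ) := by
    have hpow : lam ^ k * starRingEnd ℂ lam ^ k = 1 := by rw [← mul_pow, hlam, one_pow]
    simp only [twistedPascal, map_mul, map_pow, map_neg, map_one, map_natCast, pow_add]
    push_cast
    linear_combination (-1) ^ j * lam ^ i * starRingEnd ℂ lam ^ j * (-1) ^ k * k.choose i *
      j.choose k * hpow
  rw [Finset.sum_congr rfl fun k _ => hterm k, ← Finset.mul_sum, ← Int.cast_sum,
    sum_neg_one_pow_mul_choose_mul_choose hj]
  split_ifs with hij
  · subst hij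
    have hpow : lam ^ i * starRingEnd ℂ lam ^ i = 1 := by rw [← mul_pow, hlam, one_pow]
    have hsign : ((-1 : ℂ) ^ i) * (-1) ^ i = 1 := by rw [← mul_pow]; norm_num
    push_cast
    linear_combination ((-1 : ℂ) ^ i) * (-1) ^ i * hpow + hsign
  · simp

end Pascal

section Existence

variable {P : Type*} {lam : ℂ} {D : P → ℕ} {E : Matrix P P ℤ}

/-- The block matrix with blocks `E p q • (twistedPascal lam i j)`, a Kronecker product when all
block sizes agree; it is a reversing structure for `jordanSum lam D` when `E * E = -1` and `E`
only couples blocks of equal size. -/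
def pascalStructure (lam : ℂ) (D : P → ℕ) (E : Matrix P P ℤ) :
    Matrix ((p : P) × Fin (D p)) ((p : P) × Fin (D p)) ℂ :=
  of fun x y => E x.1 y.1 * twistedPascal lam x.2 y.2

variable [Fintype P] [DecidableEq P]

theorem blockShift_one_mul_pascalStructure (hED : ∀ p q, E p q ≠ 0 → D p = D q) :
    blockShift D 1 * pascalStructure lam D E =
      of fun x y => E x.1 y.1 * twistedPascal lam (x.2 + 1) y.2 := by
  ext ⟨p, i⟩ ⟨q, j⟩
  rw [blockShift_mul_apply]
  split_ifs with hi
  · rfl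
  · by_cases hpq : E p q = 0
    · simp [hpq]
    · have hlt : j.val < i + 1 := by have := hED p q hpq; omega
      simp [twistedPascal_eq_zero_of_lt lam hlt]

theorem jordanSum_mul_pascalStructure_mul_conj (hlam : lam * starRingEnd ℂ lam = 1)
    (hED : ∀ p q, E p q ≠ 0 → D p = D q) :
    jordanSum lam D * pascalStructure lam D E * (starRingEnd ℂ).mapMatrix (jordanSum lam D) =
      pascalStructure lam D E := by
  rw [jordanSum_mul_mul_conj D hlam, add_eq_left]
  ext ⟨p, i⟩ ⟨q, j, hj⟩
  rw [blockShift_one_mul_pascalStructure hED, Matrix.add_apply, Matrix.add_apply,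
    Matrix.smul_apply, Matrix.smul_apply, mul_blockShift_apply, mul_blockShift_apply]
  cases j with
  | zero => simp [twistedPascal_eq_zero_of_lt]
  | succ j =>
    simp only [pascalStructure, of_apply, Nat.le_add_left, if_true, Nat.add_sub_cancel,
      smul_eq_mul, Matrix.zero_apply]
    linear_combination (E p q : ℂ) * twistedPascal_pascal_rule hlam i j

theorem pascalStructure_mul_conj (hlam : lam * starRingEnd ℂ lam = 1) (hE : E * E = -1)
    (hED : ∀ p q, E p q ≠ 0 → D p = D q) :
    pascalStructure lam D E * (starRingEnd ℂ).mapMatrix (pascalStructure lam D E) = -1 := by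
  ext ⟨p, i⟩ ⟨q, j⟩
  have hsum (r : P) : ∑ k : Fin (D r), pascalStructure lam D E ⟨p, i⟩ ⟨r, k⟩ *
      starRingEnd ℂ (pascalStructure lam D E ⟨r, k⟩ ⟨q, j⟩) =
        (E p r * E r q : ℤ) * if i.val = j.val then 1 else 0 := by
    by_cases hrq : E r q = 0
    · simp [pascalStructure, hrq]
    rw [← sum_twistedPascal_mul_conj hlam (j.isLt.trans_eq (hED r q hrq).symm),
      ← Fin.sum_univ_eq_sum_range, Finset.mul_sum]
    refine Finset.sum_congr rfl fun k _ => ?_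
    simp only [pascalStructure, of_apply, map_mul, map_intCast, Int.cast_mul]
    ring
  rw [mul_apply, Fintype.sum_sigma]
  simp only [RingHom.mapMatrix_apply, map_apply, hsum]
  rw [← Finset.sum_mul, ← Int.cast_sum, ← mul_apply, hE]
  by_cases hpq : p = q
  · subst hpq
    simp [one_apply, Fin.ext_iff, apply_ite]
  · simp [one_apply, hpq]

theorem exists_isReversingStructure_jordanSum_iff (hlam : lam * starRingEnd ℂ lam = 1)
    (hD : ∀ p, 0 < D p) :
    (∃ Y, IsReversingStructure (jordanSum lam D) Y) ↔
      ∀ k, Even (Fintype.card {p // D p = k}) := by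
  refine ⟨fun ⟨_, hY⟩ => even_card_eq_of_even_card_lt hD (hY.even_card_lt hlam), fun h => ?_⟩
  obtain ⟨E, hE, hED⟩ := exists_mul_self_eq_neg_one_of_even_card_fiber D h
  exact ⟨pascalStructure lam D E, jordanSum_mul_pascalStructure_mul_conj hlam hED,
    pascalStructure_mul_conj hlam hE hED⟩

end Existence

section Quaternion

variable {m : Type*}

theorem eq_of_map_qc1_eq_of_map_qc2_eq {n : Type*} {A B : Matrix m n (Quaternion ℝ)}
    (h₁ : A.map qc1 = B.map qc1) (h₂ : A.map qc2 = B.map qc2) : A = B := by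
  refine Matrix.ext fun x y => ?_
  have h₁ := Complex.ext_iff.mp (congrFun (congrFun h₁ x) y)
  have h₂ := Complex.ext_iff.mp (congrFun (congrFun h₂ x) y)
  exact Quaternion.ext _ _ h₁.1 h₁.2 h₂.1 h₂.2

theorem qc1_mul (a b : Quaternion ℝ) :
    qc1 (a * b) = qc1 a * qc1 b - qc2 a * starRingEnd ℂ (qc2 b) := by
  apply Complex.ext <;> simp [qc1, qc2] <;> ring

theorem qc2_mul (a b : Quaternion ℝ) :
    qc2 (a * b) = qc1 a * qc2 b + qc2 a * starRingEnd ℂ (qc1 b) := by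
  apply Complex.ext <;> simp [qc1, qc2] <;> ring

theorem qc1_sum {ι : Type*} (s : Finset ι) (f : ι → Quaternion ℝ) :
    qc1 (∑ i ∈ s, f i) = ∑ i ∈ s, qc1 (f i) :=
  map_sum (AddMonoidHom.mk' qc1 fun _ _ => rfl) f s

theorem qc2_sum {ι : Type*} (s : Finset ι) (f : ι → Quaternion ℝ) :
    qc2 (∑ i ∈ s, f i) = ∑ i ∈ s, qc2 (f i) :=
  map_sum (AddMonoidHom.mk' qc2 fun _ _ => rfl) f s

theorem map_qc1_one [DecidableEq m] : (1 : Matrix m m (Quaternion ℝ)).map qc1 = 1 :=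
  Matrix.map_one qc1 rfl rfl

theorem map_qc2_one [DecidableEq m] : (1 : Matrix m m (Quaternion ℝ)).map qc2 = 0 := by
  ext x y
  rw [map_apply, one_apply]
  split_ifs <;> rfl

variable [Fintype m]

theorem map_qc1_mul [DecidableEq m] (A B : Matrix m m (Quaternion ℝ)) :
    (A * B).map qc1 =
      A.map qc1 * B.map qc1 - A.map qc2 * (starRingEnd ℂ).mapMatrix (B.map qc2) := by
  ext x y
  simp [mul_apply, qc1_sum, qc1_mul, Finset.sum_sub_distrib]

theorem map_qc2_mul [DecidableEq m] (A B : Matrix m m (Quaternion ℝ)) :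
    (A * B).map qc2 =
      A.map qc1 * B.map qc2 + A.map qc2 * (starRingEnd ℂ).mapMatrix (B.map qc1) := by
  ext x y
  simp [mul_apply, qc2_sum, qc2_mul, Finset.sum_add_distrib]

theorem Phi_eq [DecidableEq m] (A : Matrix m m (Quaternion ℝ)) :
    Phi A = fromBlocks (A.map qc1) (A.map qc2) (-(starRingEnd ℂ).mapMatrix (A.map qc2))
      ((starRingEnd ℂ).mapMatrix (A.map qc1)) :=
  rfl

theorem Phi_mul (A B : Matrix m m (Quaternion ℝ)) : Phi (A * B) = Phi A * Phi B := by
  classical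
  have hconj (M : Matrix m m ℂ) :
      (starRingEnd ℂ).mapMatrix ((starRingEnd ℂ).mapMatrix M) = M := by
    ext; simp
  simp only [Phi_eq, fromBlocks_multiply, map_qc1_mul, map_qc2_mul, map_add, map_sub, map_mul,
    hconj]
  congr 1 <;> noncomm_ring

variable [DecidableEq m]

theorem qdet_mul (A B : Matrix m m (Quaternion ℝ)) : qdet (A * B) = qdet A * qdet B := by
  rw [qdet, Phi_mul, det_mul, qdet, qdet]

theorem qdet_units_conj (S : (Matrix m m (Quaternion ℝ))ˣ) (A : Matrix m m (Quaternion ℝ)) :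
    qdet (S.val * A * S⁻¹.val) = qdet A := by
  rw [qdet_mul, mul_comm, ← qdet_mul, ← mul_assoc, ← Units.val_mul, inv_mul_cancel, Units.val_one,
    one_mul]

theorem det_fromBlocks_zero_neg_zero {R : Type*} [CommRing R] (M N : Matrix m m R) :
    (fromBlocks 0 M (-N) 0).det = M.det * N.det := by
  have hfactor : fromBlocks 0 M (-N) 0 =
      fromBlocks M 0 0 N * (fromBlocks 1 1 0 1 * fromBlocks 1 0 (-1) 1 * fromBlocks 1 1 0 1) := by
    simp [fromBlocks_multiply]
  simp [hfactor]

end Quaternion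

section Involution

/-- The real-linear map `z ↦ z · j` from `ℂ` to the quaternions, complementary to `C2H`. -/
def C2Hj (z : ℂ) : Quaternion ℝ := ⟨0, 0, z.re, z.im⟩

variable {m : Type*} [Fintype m]

theorem map_qc1_map_C2H_mul_mul_map_C2H (J : Matrix m m ℂ) (H : Matrix m m (Quaternion ℝ)) :
    (J.map C2H * H * J.map C2H).map qc1 = J * H.map qc1 * J := by
  classical
  have h₁ : (J.map C2H).map qc1 = J := rfl
  have h₂ : (J.map C2H).map qc2 = 0 := rfl
  simp only [map_qc1_mul, map_qc2_mul, h₁, h₂, zero_mul, map_zero, mul_zero, sub_zero]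

variable [DecidableEq m]

theorem map_qc2_map_C2H_mul_mul_map_C2H (J : Matrix m m ℂ) (H : Matrix m m (Quaternion ℝ)) :
    (J.map C2H * H * J.map C2H).map qc2 =
      J * H.map qc2 * (starRingEnd ℂ).mapMatrix J := by
  have h₁ : (J.map C2H).map qc1 = J := rfl
  have h₂ : (J.map C2H).map qc2 = 0 := rfl
  simp only [map_qc2_mul, h₁, h₂, zero_mul, mul_zero, zero_add, add_zero]

variable {J Y : Matrix m m ℂ} {H : Matrix m m (Quaternion ℝ)}

theorem isReversingStructure_map_qc2 (hJ : ∀ X, J * X * J = X → X = 0)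
    (hrev : J.map C2H * H * J.map C2H = H) (hinv : H * H = 1) :
    IsReversingStructure J (H.map qc2) := by
  have hX : H.map qc1 = 0 := hJ _ (by rw [← map_qc1_map_C2H_mul_mul_map_C2H, hrev])
  refine ⟨by rw [← map_qc2_map_C2H_mul_mul_map_C2H, hrev], ?_⟩
  rw [← neg_eq_iff_eq_neg, ← map_qc1_one, ← hinv, map_qc1_mul, hX, zero_mul, zero_sub]

theorem IsReversingStructure.map_C2H_mul_mul_map_C2H (hY : IsReversingStructure J Y) :
    J.map C2H * Y.map C2Hj * J.map C2H = Y.map C2Hj := by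
  have h₁ : (Y.map C2Hj).map qc1 = 0 := rfl
  have h₂ : (Y.map C2Hj).map qc2 = Y := rfl
  refine eq_of_map_qc1_eq_of_map_qc2_eq ?_ ?_
  · rw [map_qc1_map_C2H_mul_mul_map_C2H, h₁, mul_zero, zero_mul]
  · rw [map_qc2_map_C2H_mul_mul_map_C2H, h₂, hY.mul_mul_conj]

theorem IsReversingStructure.map_C2Hj_mul_self (hY : IsReversingStructure J Y) :
    Y.map C2Hj * Y.map C2Hj = 1 := by
  have h₁ : (Y.map C2Hj).map qc1 = 0 := rfl
  have h₂ : (Y.map C2Hj).map qc2 = Y := rfl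
  refine eq_of_map_qc1_eq_of_map_qc2_eq ?_ ?_
  · rw [map_qc1_mul, h₁, h₂, hY.mul_conj, zero_mul, zero_sub, neg_neg, map_qc1_one]
  · rw [map_qc2_mul, h₁, zero_mul, map_zero, mul_zero, add_zero, map_qc2_one]

theorem IsReversingStructure.qdet_map_C2Hj (hY : IsReversingStructure J Y) :
    qdet (Y.map C2Hj) = 1 := by
  have h₁ : (Y.map C2Hj).map qc1 = 0 := rfl
  have h₂ : (Y.map C2Hj).map qc2 = Y := rfl
  rw [qdet, Phi_eq, h₁, h₂, map_zero, det_fromBlocks_zero_neg_zero, ← det_mul, hY.mul_conj,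
    det_neg, det_one, mul_one, (even_card_of_mul_conj_eq_neg_one hY.mul_conj).neg_one_pow]

theorem mul_mul_inv_eq_inv_iff {G : Type*} [Group G] {g a : G} :
    g * a * g⁻¹ = a⁻¹ ↔ a * g * a = g := by
  rw [mul_inv_eq_iff_eq_mul, eq_inv_mul_iff_mul_eq, mul_assoc]

theorem tfae_stronglyReversible_of_conj (hJ : ∀ X, J * X * J = X → X = 0)
    {A S : (Matrix m m (Quaternion ℝ))ˣ} (hS : S.val * A.val * S⁻¹.val = J.map C2H) :
    List.TFAE [
      ∃ g : (Matrix m m (Quaternion ℝ))ˣ, qdet g.val = 1 ∧ g * g = 1 ∧ g * A * g⁻¹ = A⁻¹,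
      ∃ g : (Matrix m m (Quaternion ℝ))ˣ, g * g = 1 ∧ g * A * g⁻¹ = A⁻¹,
      ∃ Y, IsReversingStructure J Y] := by
  let φ := MulAut.conj S
  have hφA : (φ A).val = J.map C2H := hS
  tfae_have 1 → 2 := fun ⟨g, _, hg⟩ => ⟨g, hg⟩
  tfae_have 2 → 3 := by
    rintro ⟨g, hinv, hrev⟩
    have hrev' : φ A * φ g * φ A = φ g := by
      rw [← map_mul, ← map_mul, mul_mul_inv_eq_inv_iff.mp hrev]
    have hinv' : φ g * φ g = 1 := by rw [← map_mul, hinv, map_one]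
    refine ⟨(φ g).val.map qc2, isReversingStructure_map_qc2 hJ ?_ (congrArg Units.val hinv')⟩
    exact hφA ▸ congrArg Units.val hrev'
  tfae_have 3 → 1 := by
    rintro ⟨Y, hY⟩
    let h : (Matrix m m (Quaternion ℝ))ˣ :=
      ⟨Y.map C2Hj, Y.map C2Hj, hY.map_C2Hj_mul_self, hY.map_C2Hj_mul_self⟩
    obtain ⟨g, hg⟩ : ∃ g, φ g = h := φ.surjective h
    refine ⟨g, ?_, φ.injective ?_, mul_mul_inv_eq_inv_iff.mpr (φ.injective ?_)⟩
    · rw [← qdet_units_conj S]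
      exact (congrArg (qdet ∘ Units.val) hg).trans hY.qdet_map_C2Hj
    · rw [map_mul, map_one, hg]
      exact Units.ext hY.map_C2Hj_mul_self
    · rw [map_mul, map_mul, hg]
      refine Units.ext ?_
      rw [Units.val_mul, Units.val_mul, hφA]
      exact hY.map_C2H_mul_mul_map_C2H
  tfae_finish

end Involution

theorem stronglyReversible_single_unit_eigenvalue_iff_general {P m : Type*} [Fintype P]
    [DecidableEq P] [Fintype m] [DecidableEq m] {lam : ℂ} (hlam : ‖lam‖ = 1) (him : lam.im ≠ 0)
    {D : P → ℕ} (hD : ∀ p, 0 < D p) (A : (Matrix m m (Quaternion ℝ))ˣ)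
    (hconj : ∃ (e : ((p : P) × Fin (D p)) ≃ m) (S : (Matrix m m (Quaternion ℝ))ˣ),
      S.val * A.val * (S⁻¹).val = (reindex e e (jordanSum lam D)).map C2H) :
    List.TFAE [
      ∃ g : (Matrix m m (Quaternion ℝ))ˣ, qdet g.val = 1 ∧ g * g = 1 ∧ g * A * g⁻¹ = A⁻¹,
      ∃ g : (Matrix m m (Quaternion ℝ))ˣ, g * g = 1 ∧ g * A * g⁻¹ = A⁻¹,
      ∀ k, Even (Fintype.card {p // D p = k})] := by
  obtain ⟨e, S, hS⟩ := hconj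
  have hlam' : lam * starRingEnd ℂ lam = 1 := by
    rw [Complex.mul_conj', hlam, Complex.ofReal_one, one_pow]
  have hsq : IsUnit (1 - lam * lam) := by
    refine isUnit_iff_ne_zero.mpr (sub_ne_zero.mpr fun h => him ?_)
    rcases mul_self_eq_one_iff.mp h.symm with h | h <;> simp [h]
  have hnil : IsNilpotent (reindex e e (jordanSum lam D) - algebraMap ℂ _ lam) := by
    have h := (isNilpotent_jordanSum_sub lam D).map (reindexAlgEquiv ℂ ℂ e)
    rwa [map_sub, AlgEquiv.commutes] at h
  rw [← exists_isReversingStructure_jordanSum_iff hlam' hD,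
    ← exists_isReversingStructure_reindex_iff e]
  exact tfae_stronglyReversible_of_conj (fun _ => eq_zero_of_mul_mul_eq_self hsq hnil) hS

/-- Let `θ ∈ (0, π)` and let `A ∈ SL(n, ℍ)` have Jordan form consisting, for each
`ℓ = 1, …, s`, of `t ℓ` copies of `J(e^{iθ}, d ℓ)`, where `d 1 > ⋯ > d s > 0` and
`∑ t ℓ * d ℓ = n`.  Then `A` is strongly reversible in `SL(n, ℍ)` iff every `t ℓ` is even. -/
theorem stronglyReversible_single_unit_eigenvalue_iff (n s : ℕ) (θ : ℝ)
    (hθ0 : 0 < θ) (hθπ : θ < Real.pi)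
    (d t : Fin s → ℕ) (hd : StrictAnti d) (hdpos : ∀ ℓ, 1 ≤ d ℓ) (ht : ∀ ℓ, 1 ≤ t ℓ)
    (hsum : ∑ ℓ, t ℓ * d ℓ = n)
    (A : (Matrix (Fin n) (Fin n) (Quaternion ℝ))ˣ) (hA : qdet A.val = 1)
    (hconj : ∃ (e : ((p : (ℓ : Fin s) × Fin (t ℓ)) × Fin (d p.1)) ≃ Fin n)
        (S : (Matrix (Fin n) (Fin n) (Quaternion ℝ))ˣ),
        S.val * A.val * (S⁻¹).val =
          (Matrix.reindex e e (Matrix.blockDiagonal' fun p : (ℓ : Fin s) × Fin (t ℓ) =>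
            jordanC (Complex.exp (θ * Complex.I)) (d p.1))).map C2H) :
    (∃ g : (Matrix (Fin n) (Fin n) (Quaternion ℝ))ˣ,
        qdet g.val = 1 ∧ g * g = 1 ∧ g * A * g⁻¹ = A⁻¹) ↔
      ∀ ℓ, Even (t ℓ) := by
  have him : (Complex.exp (θ * Complex.I)).im ≠ 0 := by
    rw [Complex.exp_ofReal_mul_I_im]
    exact (Real.sin_pos_of_pos_of_lt_pi hθ0 hθπ).ne'
  exact ((stronglyReversible_single_unit_eigenvalue_iff_general
    (D := fun p : (ℓ : Fin s) × Fin (t ℓ) => d p.1) (Complex.norm_exp_ofReal_mul_I θ) him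
    (fun p => hdpos p.1) A hconj).out 0 2).trans
      (forall_even_card_sigma_fin_fiber_iff hd.injective t)
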